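/- arXiv:2605.13669 — 5 statements merged into one kernel-verified Lean document; each statement's English description precedes it below -/
import Mathlib

section
/- Let a_max > 0, a_min < 0, λ ∈ (0,1), ρ = 2n for some positive natural number n, and χ > 0 with χ + λ·a_min > 0. Let u : ℝ → ℝ be a measurable commanded input with |u(t)| ≤ χ for all t ≥ 0, and let a : ℝ → ℝ be a differentiable function satisfying, for all t ≥ 0, a'(t) = [1 − (a(t)/a_max)^ρ]·u(t) − λ·a(t) whenever a(t) ≥ 0, and a'(t) = [1 − (a(t)/a_min)^ρ]·u(t) − λ·a(t) whenever a(t) < 0. If a(0) ∈ (a_min, a_max), then a(t) ∈ (a_min, a_max) for all t ≥ 0. -/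
/-- A differentiable function that starts strictly below `c`, and whose derivative is negative
whenever it takes the value `c`, stays strictly below `c`. -/
theorem lt_of_deriv_neg_on_level {f : ℝ → ℝ} {c : ℝ} (hf : Differentiable ℝ f) (h0 : f 0 < c)
    (hc : ∀ t, 0 ≤ t → f t = c → deriv f t < 0) {t : ℝ} (ht : 0 ≤ t) : f t < c := by
  have hle : ∀ s, 0 ≤ s → f s ≤ c := fun s hs =>
    image_le_of_deriv_right_lt_deriv_boundary (B := fun _ => c) (B' := fun _ => 0)
      hf.continuous.continuousOn (fun x _ => (hf x).hasDerivAt.hasDerivWithinAt) h0.le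
      (fun x => hasDerivAt_const x c) (fun x hx => hc x hx.1) (Set.right_mem_Icc.2 hs)
  refine (hle t ht).lt_of_ne fun heq => ?_
  have hpos : 0 < t := ht.lt_of_ne fun h => by
    subst h
    exact h0.ne heq
  have hmax : IsLocalMax f t := by
    filter_upwards [lt_mem_nhds hpos] with s hs
    exact heq ▸ hle s hs.le
  exact (hc t ht heq).ne hmax.deriv_eq_zero

/-- **Saturation-model confinement (Theorem 1).**
Under the first-order asymmetric smooth input saturation model driven by any
measurable commanded input `u` bounded by `χ`, the achieved acceleration `a`
remains strictly within the asymmetric bounds `(a_min, a_max)` for all `t ≥ 0`. -/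
theorem saturation_model_confinement
    (a_max a_min lam χ : ℝ) (n : ℕ) (ρ : ℕ)
    (hmax : 0 < a_max) (hmin : a_min < 0)
    (hlam : lam ∈ Set.Ioo (0 : ℝ) 1)
    (hn : 0 < n) (hρ : ρ = 2 * n)
    (hχ : 0 < χ) (hχmin : 0 < χ + lam * a_min)
    (u : ℝ → ℝ) (hu_meas : Measurable u)
    (hu_bdd : ∀ t : ℝ, 0 ≤ t → |u t| ≤ χ)
    (a : ℝ → ℝ) (ha_diff : Differentiable ℝ a)
    (hode_pos : ∀ t : ℝ, 0 ≤ t → 0 ≤ a t →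
      deriv a t = (1 - (a t / a_max) ^ ρ) * u t - lam * a t)
    (hode_neg : ∀ t : ℝ, 0 ≤ t → a t < 0 →
      deriv a t = (1 - (a t / a_min) ^ ρ) * u t - lam * a t)
    (h0 : a 0 ∈ Set.Ioo a_min a_max) :
    ∀ t : ℝ, 0 ≤ t → a t ∈ Set.Ioo a_min a_max := by
  have hlam0 : 0 < lam := hlam.1
  refine fun t ht => ⟨?_, ?_⟩
  · refine neg_lt_neg_iff.1 (lt_of_deriv_neg_on_level ha_diff.neg (neg_lt_neg h0.1) ?_ ht)
    intro s hs hsa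
    have hsa : a s = a_min := neg_injective hsa
    have hd := hode_neg s hs (hsa ▸ hmin)
    rw [hsa, div_self hmin.ne, one_pow] at hd
    rw [deriv.neg, hd]
    linarith [mul_neg_of_pos_of_neg hlam0 hmin]
  · refine lt_of_deriv_neg_on_level ha_diff h0.2 (fun s hs hsa => ?_) ht
    have hd := hode_pos s hs (hsa ▸ hmax.le)
    rw [hsa, div_self hmax.ne', one_pow] at hd
    rw [hd]
    linarith [mul_pos hlam0 hmax]
end

section
/- Let c be a real constant and let r, V_r, V_θ, ϑ, a_I : ℝ → ℝ be functions such that at a time t the following derivative relations hold: r'(t) = V_r(t), V_r'(t) = ϑ'(t)·V_θ(t), V_θ'(t) = −ϑ'(t)·V_r(t) − a_I(t), and r(t)·ϑ'(t) = V_θ(t). Suppose D(t) := V_θ(t)² + V_r(t)² + 2c·V_r(t) ≠ 0 in a neighborhood of t. Then the function t_go := −r·(V_r + 2c)/(V_θ² + V_r² + 2c·V_r) is differentiable at t with derivative t_go'(t) = −1 + 2c·(V_r(t) + 2c)·V_θ(t)²/D(t)² − 2·(V_r(t) + 2c)·V_θ(t)·r(t)·a_I(t)/D(t)². -/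
/-- Derivative of the exact TPNG time-to-go
`t_go = −r·(V_r + 2c)/(V_θ² + V_r² + 2c·V_r)` along the engagement kinematics
`ṙ = V_r`, `V̇_r = ϑ̇·V_θ`, `V̇_θ = −ϑ̇·V_r − a_I`, `r·ϑ̇ = V_θ`. -/
theorem tgo_derivative
    (c : ℝ) (r Vr Vθ ϑ aI : ℝ → ℝ) (t ω : ℝ)
    (hθ : HasDerivAt ϑ ω t)
    (hr : HasDerivAt r (Vr t) t)
    (hVr : HasDerivAt Vr (ω * Vθ t) t)
    (hVθ : HasDerivAt Vθ (-ω * Vr t - aI t) t)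
    (hrel : r t * ω = Vθ t)
    (hD : ∀ᶠ s in nhds t, Vθ s ^ 2 + Vr s ^ 2 + 2 * c * Vr s ≠ 0) :
    HasDerivAt
      (fun s => -(r s * (Vr s + 2 * c)) / (Vθ s ^ 2 + Vr s ^ 2 + 2 * c * Vr s))
      (-1 + 2 * c * (Vr t + 2 * c) * Vθ t ^ 2 /
            (Vθ t ^ 2 + Vr t ^ 2 + 2 * c * Vr t) ^ 2
         - 2 * (Vr t + 2 * c) * Vθ t * r t * aI t /
            (Vθ t ^ 2 + Vr t ^ 2 + 2 * c * Vr t) ^ 2) t := by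
  have hDt : Vθ t ^ 2 + Vr t ^ 2 + 2 * c * Vr t ≠ 0 := hD.self_of_nhds
  have hN : HasDerivAt (fun s => -(r s * (Vr s + 2 * c)))
      (-(Vθ t ^ 2 + Vr t ^ 2 + 2 * c * Vr t)) t := by
    refine (hr.mul (hVr.add_const (2 * c))).neg.congr_deriv ?_
    linear_combination -Vθ t * hrel
  have hDen : HasDerivAt (fun s => Vθ s ^ 2 + Vr s ^ 2 + 2 * c * Vr s)
      (2 * c * ω * Vθ t - 2 * Vθ t * aI t) t := by
    refine (((hVθ.pow 2).add (hVr.pow 2)).add (hVr.const_mul (2 * c))).congr_deriv ?_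
    push_cast
    ring
  refine (hN.div hDen hDt).congr_deriv ?_
  generalize Vθ t ^ 2 + Vr t ^ 2 + 2 * c * Vr t = D at hDt ⊢
  field_simp
  linear_combination 2 * c * (Vr t + 2 * c) * Vθ t * hrel
end

section
/- Let c be a real constant, t_d a real constant, and let r, V_r, V_θ, ϑ, a_I : ℝ → ℝ satisfy at time t: r'(t) = V_r(t), V_r'(t) = ϑ'(t)·V_θ(t), V_θ'(t) = −ϑ'(t)·V_r(t) − a_I(t), and r(t)·ϑ'(t) = V_θ(t), with D(t) := V_θ(t)² + V_r(t)² + 2c·V_r(t) ≠ 0 in a neighborhood of t. Define the impact-time error e(t) := t_go(t) − (t_d − t), where t_go := −r·(V_r + 2c)/D. Then e is differentiable at t with e'(t) = F(t) + B(t)·a_I(t), where F := 2c·(V_r + 2c)·V_θ²/D² and B := −2·(V_r + 2c)·V_θ·r/D². -/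
/-- Dynamics of the impact-time error `e = t_go − (t_d − t)`:
`ė = F + B·a_I` with `F = 2c·(V_r+2c)·V_θ²/D²` and `B = −2·(V_r+2c)·V_θ·r/D²`,
where `D = V_θ² + V_r² + 2c·V_r`. -/
theorem impact_time_error_dynamics
    (c t_d : ℝ) (r Vr Vθ ϑ aI : ℝ → ℝ) (t ω : ℝ)
    (hθ : HasDerivAt ϑ ω t)
    (hr : HasDerivAt r (Vr t) t)
    (hVr : HasDerivAt Vr (ω * Vθ t) t)
    (hVθ : HasDerivAt Vθ (-ω * Vr t - aI t) t)
    (hrel : r t * ω = Vθ t)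
    (hD : ∀ᶠ s in nhds t, Vθ s ^ 2 + Vr s ^ 2 + 2 * c * Vr s ≠ 0) :
    HasDerivAt
      (fun s =>
        -(r s * (Vr s + 2 * c)) / (Vθ s ^ 2 + Vr s ^ 2 + 2 * c * Vr s) - (t_d - s))
      (2 * c * (Vr t + 2 * c) * Vθ t ^ 2 /
          (Vθ t ^ 2 + Vr t ^ 2 + 2 * c * Vr t) ^ 2
        + (-(2 * (Vr t + 2 * c) * Vθ t * r t) /
            (Vθ t ^ 2 + Vr t ^ 2 + 2 * c * Vr t) ^ 2) * aI t) t := by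
  have hDt := hD.self_of_nhds
  have hnum : HasDerivAt (fun s => -(r s * (Vr s + 2 * c)))
      (-(Vθ t ^ 2 + Vr t ^ 2 + 2 * c * Vr t)) t := by
    refine (hr.fun_mul (hVr.add_const (2 * c))).fun_neg.congr_deriv ?_
    linear_combination -Vθ t * hrel
  have hden : HasDerivAt (fun s => Vθ s ^ 2 + Vr s ^ 2 + 2 * c * Vr s)
      (2 * c * ω * Vθ t - 2 * Vθ t * aI t) t := by
    refine (((hVθ.fun_pow 2).fun_add (hVr.fun_pow 2)).fun_add
      (hVr.const_mul (2 * c))).congr_deriv ?_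
    push_cast
    ring
  refine ((hnum.fun_div hden hDt).fun_sub ((hasDerivAt_id' t).const_sub t_d)).congr_deriv ?_
  generalize Vθ t ^ 2 + Vr t ^ 2 + 2 * c * Vr t = D at hDt ⊢
  field_simp
  linear_combination 2 * c * (Vr t + 2 * c) * Vθ t * hrel
end

section
/- Let M > 0, θ ∈ (0,1), κ > 0, η a strictly positive integer, and define g(S) := θ + (1 − θ)·exp(−κ·|S|^η). Let S : ℝ → ℝ be continuous on [0, T] and differentiable on (0, T), with S(t) ≠ 0 for all t ∈ [0, T), S(T) = 0, and g(S(t))·S'(t) = −M·sign(S(t)) for all t ∈ (0, T). Then T = (1/M)·(θ·|S(0)| + (1 − θ)·∫₀^{|S(0)|} exp(−κ·s^η) ds). -/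
/-- The travel-time primitive `x ↦ θ·x + (1−θ)·∫₀^x e^{−κ s^η} ds` has derivative
`θ + (1−θ)·e^{−κ x^η}`. -/
lemma hasDerivAt_reachingPrimitive (θ κ : ℝ) (η : ℕ) (x : ℝ) :
    HasDerivAt (fun y : ℝ => θ * y + (1 - θ) * ∫ s in (0 : ℝ)..y, Real.exp (-κ * s ^ η))
      (θ + (1 - θ) * Real.exp (-κ * x ^ η)) x := by
  have hc : Continuous fun s : ℝ => Real.exp (-κ * s ^ η) := by fun_prop
  have h := ((hasDerivAt_id x).const_mul θ).add
    ((hc.integral_hasStrictDerivAt 0 x).hasDerivAt.const_mul (1 - θ))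
  exact h.congr_deriv (by ring)

/-- Away from zero, `|f|` has derivative `sign (f t) * f'`. -/
lemma HasDerivAt.abs_of_ne_zero {f : ℝ → ℝ} {d t : ℝ} (hf : HasDerivAt f d t) (h : f t ≠ 0) :
    HasDerivAt (fun u => |f u|) (Real.sign (f t) * d) t := by
  rcases h.lt_or_gt with h | h
  · rw [Real.sign_of_neg h]
    exact (hasDerivAt_abs_neg h).comp t hf
  · rw [Real.sign_of_pos h]
    exact (hasDerivAt_abs_pos h).comp t hf

/-- Reaching time of the exponential reaching law `Ṡ = −(M/g(S))·sign(S)` with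
`g(S) = θ + (1−θ)·e^{−κ|S|^η}`: the time `T` to reach the sliding surface from
`S(0)` equals `(1/M)·(θ·|S(0)| + (1−θ)·∫₀^{|S(0)|} e^{−κ s^η} ds)`. -/
theorem exponential_reaching_time
    (M θ κ T : ℝ) (η : ℕ)
    (hM : 0 < M) (hθ : θ ∈ Set.Ioo (0 : ℝ) 1) (hκ : 0 < κ) (hη : 0 < η)
    (hT : 0 ≤ T)
    (S : ℝ → ℝ)
    (hcont : ContinuousOn S (Set.Icc 0 T))
    (hderiv : ∀ t ∈ Set.Ioo 0 T, ∃ d : ℝ, HasDerivAt S d t ∧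
      (θ + (1 - θ) * Real.exp (-κ * |S t| ^ η)) * d = -M * Real.sign (S t))
    (hne : ∀ t ∈ Set.Ico 0 T, S t ≠ 0)
    (hT0 : S T = 0) :
    T = (1 / M) *
      (θ * |S 0| + (1 - θ) * ∫ s in (0 : ℝ)..|S 0|, Real.exp (-κ * s ^ η)) := by
  rcases hT.eq_or_lt with rfl | hT
  · simp [hT0]
  let G : ℝ → ℝ := fun y => θ * y + (1 - θ) * ∫ s in (0 : ℝ)..y, Real.exp (-κ * s ^ η)
  have hG : ∀ x, HasDerivAt G (θ + (1 - θ) * Real.exp (-κ * x ^ η)) x :=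
    hasDerivAt_reachingPrimitive θ κ η
  have hGc : Continuous G := continuous_iff_continuousAt.2 fun x => (hG x).continuousAt
  have hFc : ContinuousOn (fun t => G |S t| + M * t) (Set.Icc 0 T) :=
    (hGc.comp_continuousOn hcont.abs).add (by fun_prop)
  have hF : ∀ t ∈ Set.Ioo 0 T, HasDerivAt (fun t => G |S t| + M * t) 0 t := by
    intro t ht
    obtain ⟨d, hd, hode⟩ := hderiv t ht
    have hSt := hne t ⟨ht.1.le, ht.2⟩
    have hsign : Real.sign (S t) * Real.sign (S t) = 1 := by
      rcases Real.sign_apply_eq_of_ne_zero _ hSt with h | h <;> simp [h]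
    have h := ((hG |S t|).comp t (hd.abs_of_ne_zero hSt)).add ((hasDerivAt_id t).const_mul M)
    refine h.congr_deriv ?_
    linear_combination Real.sign (S t) * hode - M * hsign
  obtain ⟨c, -, hc⟩ := exists_hasDerivAt_eq_slope _ (fun _ => 0) hT hFc hF
  have hG0 : G 0 = 0 := by simp [G]
  rw [eq_comm, div_eq_zero_iff, or_iff_left (by linarith)] at hc
  simp only [hT0, abs_zero, hG0] at hc
  change T = 1 / M * G |S 0|
  field_simp
  linarith
end

section
/- Let M > 0, θ ∈ (0,1), κ > 0, η a strictly positive integer, and S₀ a real number. Define t_{r1} := |S₀|/M and t_{r2} := (1/M)·(θ·|S₀| + (1 − θ)·∫₀^{|S₀|} exp(−κ·s^η) ds). Then t_{r2} − t_{r1} = ((1 − θ)/M)·∫₀^{|S₀|} (exp(−κ·s^η) − 1) ds, and if S₀ ≠ 0 then t_{r2} < t_{r1}. -/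
/-- On an interval of positive length starting at `0`, the integral of `exp (-κ s ^ n)` is strictly
smaller than the length of the interval. -/
lemma integral_exp_neg_mul_pow_lt {κ a : ℝ} (hκ : 0 < κ) (n : ℕ) (ha : 0 < a) :
    ∫ s in (0 : ℝ)..a, Real.exp (-κ * s ^ n) < a := by
  have hint : IntervalIntegrable (fun s : ℝ => Real.exp (-κ * s ^ n)) MeasureTheory.volume 0 a :=
    Continuous.intervalIntegrable (by fun_prop) _ _
  have hpos : 0 < ∫ s in (0 : ℝ)..a, (1 - Real.exp (-κ * s ^ n)) := by
    refine intervalIntegral.intervalIntegral_pos_of_pos_on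
      (intervalIntegrable_const.sub hint) (fun s hs => ?_) ha
    have hexp : Real.exp (-κ * s ^ n) < 1 := by
      rw [Real.exp_lt_one_iff, neg_mul, neg_lt_zero]
      exact mul_pos hκ (pow_pos hs.1 n)
    linarith
  rw [intervalIntegral.integral_sub intervalIntegrable_const hint] at hpos
  simp only [intervalIntegral.integral_const, sub_zero, smul_eq_mul, mul_one] at hpos
  linarith

/-- Comparison of reaching times: with `t_{r1} = |S₀|/M` (standard reaching law)
and `t_{r2} = (1/M)·(θ·|S₀| + (1−θ)·∫₀^{|S₀|} e^{−κ s^η} ds)` (exponential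
reaching law), one has
`t_{r2} − t_{r1} = ((1−θ)/M)·∫₀^{|S₀|}(e^{−κ s^η} − 1) ds`, and `t_{r2} < t_{r1}`
whenever `S₀ ≠ 0`. -/
theorem reaching_time_comparison
    (M θ κ : ℝ) (η : ℕ) (S₀ : ℝ)
    (hM : 0 < M) (hθ : θ ∈ Set.Ioo (0 : ℝ) 1) (hκ : 0 < κ) (hη : 0 < η) :
    (1 / M) * (θ * |S₀| + (1 - θ) * ∫ s in (0 : ℝ)..|S₀|, Real.exp (-κ * s ^ η))
        - |S₀| / M =
      ((1 - θ) / M) * ∫ s in (0 : ℝ)..|S₀|, (Real.exp (-κ * s ^ η) - 1) ∧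
    (S₀ ≠ 0 →
      (1 / M) * (θ * |S₀| + (1 - θ) * ∫ s in (0 : ℝ)..|S₀|, Real.exp (-κ * s ^ η))
        < |S₀| / M) := by
  constructor
  · rw [intervalIntegral.integral_sub (Continuous.intervalIntegrable (by fun_prop) _ _)
      intervalIntegrable_const]
    simp only [intervalIntegral.integral_const, sub_zero, smul_eq_mul, mul_one]
    ring
  · intro hS
    have hlt := integral_exp_neg_mul_pow_lt hκ η (abs_pos.mpr hS)
    rw [one_div_mul_eq_div]
    refine div_lt_div_of_pos_right ?_ hM
    linarith [mul_lt_mul_of_pos_left hlt (sub_pos.mpr hθ.2)]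
end
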